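/- Let (X,d) be a compact metric space, G_1 = {g_1,…,g_m} a finite set of continuous self-maps of X, and φ : X → ℝ continuous. Then for every ε > 0 the sequence n ↦ (1/n) log( m^{-n} Σ_{w of length n} inf_{𝒰} Σ_{U∈𝒰} e^{sup_U S_wφ} ), where the infimum is over all (w,n,ε)-open covers 𝒰 of X, converges (the limit superior is a limit); indeed the sequence a_n = log( Σ_{w of length n} inf_{𝒰} Σ_{U∈𝒰} e^{sup_U S_wφ} ) is subadditive. -/

import Mathlib

/-!
The argument is the join construction for open covers. If `𝒱` is an admissible cover for the
word `v` (applied first) and `𝒰` one for `u`, then the nonempty sets `V ∩ g_v⁻¹ U` form an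
admissible cover for `u ++ v`, because `d_{uv} = max (d_v, d_u ∘ (g_v × g_v))`. Since also
`S_{uv} φ = S_v φ + S_u φ ∘ g_v`, the partition sum of the join is at most the product of the two
partition sums. Hence the infima satisfy `coverInf (u ++ v) ≤ coverInf u * coverInf v`
(`coverInf_append_le`), and summing over all words, each of length `a + b` splitting uniquely,
gives `coverSum (a + b) ≤ coverSum a * coverSum b`.

Compactness gives admissible finite covers, and a member containing a given point shows that each
infimum is at least `exp (-n K)` when `-K ≤ φ` and `n` is the length of the word. So for `m ≥ 1`
the logarithms are defined in earnest and `log (coverSum n) / n` is bounded below; Fekete's lemma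
yields convergence, and the normalisation `m ^ (-n)` only subtracts `log m`.
-/


open Filter MeasureTheory Topology
open scoped Classical

/-- Composition of the generators along a word `w = [i_n, …, i_1]` (rightmost letter applied
first): `wcomp g w = g i_n ∘ … ∘ g i_1`.  The partial compositions `g_{w,ℓ}` are obtained as
`wcomp g s` for the suffixes `s <:+ w`. -/
def wcomp {m : ℕ} {X : Type*} (g : Fin m → X → X) : List (Fin m) → X → X
  | [] => id
  | i :: w => g i ∘ wcomp g w

/-- The dynamical distance `d_w(x,y) = max_{0 ≤ ℓ ≤ n} d(g_{w,ℓ} x, g_{w,ℓ} y)`, the partial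
compositions `g_{w,ℓ}` being the compositions along the suffixes of `w`. -/
noncomputable def dynDist {m : ℕ} {X : Type*} [MetricSpace X] (g : Fin m → X → X)
    (w : List (Fin m)) (x y : X) : ℝ :=
  ((w.tails).map fun s => dist (wcomp g s x) (wcomp g s y)).foldr max 0

/-- The Birkhoff sum `S_w φ = ∑_{ℓ=0}^{n-1} φ ∘ g_{w,ℓ}` along a word `w` of length `n`
(the partial compositions being the proper suffixes of `w`). -/
noncomputable def birk {m : ℕ} {X : Type*} (g : Fin m → X → X) (φ : X → ℝ)
    (w : List (Fin m)) (x : X) : ℝ :=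
  ((w.tails.drop 1).map fun s => φ (wcomp g s x)).sum

/-- The partition function over `(w,n,ε)`-open covers (open covers all of whose members have
`d_w`-diameter `< ε`): `coverSum = ∑_{|w|=n} inf_𝒰 ∑_{U ∈ 𝒰} e^{sup_U S_w φ}`. -/
noncomputable def coverSum {m : ℕ} {X : Type*} [MetricSpace X] (g : Fin m → X → X) (φ : X → ℝ)
    (n : ℕ) (ε : ℝ) : ℝ :=
  ∑ f : Fin n → Fin m,
    sInf {z : ℝ | ∃ 𝒰 : Finset (Set X),
      (∀ U ∈ 𝒰, IsOpen U ∧ ∀ x ∈ U, ∀ y ∈ U, dynDist g (List.ofFn f) x y < ε) ∧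
      (∀ x : X, ∃ U ∈ 𝒰, x ∈ U) ∧
      z = ∑ U ∈ 𝒰, Real.exp (sSup (birk g φ (List.ofFn f) '' U))}

/-- The normalized partition function over `(w,n,ε)`-open covers. -/
noncomputable def coverZ {m : ℕ} {X : Type*} [MetricSpace X] (g : Fin m → X → X) (φ : X → ℝ)
    (n : ℕ) (ε : ℝ) : ℝ :=
  (1 / (m : ℝ) ^ n) * coverSum g φ n ε

/-- Topological pressure of the semigroup action defined via open covers; by monotonicity in
`ε` the limit as `ε → 0` is the supremum over `ε > 0`. -/
noncomputable def coverPressure {m : ℕ} {X : Type*} [MetricSpace X] (g : Fin m → X → X)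
    (φ : X → ℝ) : ℝ :=
  ⨆ ε : {ε : ℝ // 0 < ε}, limsup (fun n : ℕ => Real.log (coverZ g φ n ε.1) / n) atTop

/-! ### The infimum attached to a single word -/

/-- The set of partition sums of finite `(w, ε)`-open covers, whose infimum enters `coverSum`. -/
def coverSet {m : ℕ} {X : Type*} [MetricSpace X] (g : Fin m → X → X) (φ : X → ℝ)
    (w : List (Fin m)) (ε : ℝ) : Set ℝ :=
  {z : ℝ | ∃ 𝒰 : Finset (Set X),
      (∀ U ∈ 𝒰, IsOpen U ∧ ∀ x ∈ U, ∀ y ∈ U, dynDist g w x y < ε) ∧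
      (∀ x : X, ∃ U ∈ 𝒰, x ∈ U) ∧
      z = ∑ U ∈ 𝒰, Real.exp (sSup (birk g φ w '' U))}

/-- The contribution of a single word to `coverSum`. -/
noncomputable def coverInf {m : ℕ} {X : Type*} [MetricSpace X] (g : Fin m → X → X) (φ : X → ℝ)
    (w : List (Fin m)) (ε : ℝ) : ℝ :=
  sInf (coverSet g φ w ε)

/-! ### Dynamical distance and Birkhoff sums of concatenated words -/

section Words

variable {m : ℕ} {X : Type*} (g : Fin m → X → X) (φ : X → ℝ)

lemma coverSum_eq [MetricSpace X] (n : ℕ) (ε : ℝ) :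
    coverSum g φ n ε = ∑ f : Fin n → Fin m, coverInf g φ (List.ofFn f) ε := rfl

lemma wcomp_append (u v : List (Fin m)) (x : X) :
    wcomp g (u ++ v) x = wcomp g u (wcomp g v x) := by
  induction u with
  | nil => rfl
  | cons i u ih => simp [wcomp, ih]

lemma birk_cons (i : Fin m) (w : List (Fin m)) (x : X) :
    birk g φ (i :: w) x = φ (wcomp g w x) + birk g φ w x := by
  cases w <;> simp [birk]

lemma birk_append (u v : List (Fin m)) (x : X) :
    birk g φ (u ++ v) x = birk g φ v x + birk g φ u (wcomp g v x) := by
  induction u with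
  | nil => simp [birk]
  | cons i u ih =>
    rw [List.cons_append, birk_cons, birk_cons, ih, wcomp_append]
    ring

lemma dynDist_cons [MetricSpace X] (i : Fin m) (w : List (Fin m)) (x y : X) :
    dynDist g (i :: w) x y =
      max (dist (wcomp g (i :: w) x) (wcomp g (i :: w) y)) (dynDist g w x y) := by
  simp [dynDist]

lemma dynDist_append [MetricSpace X] (u v : List (Fin m)) (x y : X) :
    dynDist g (u ++ v) x y =
      max (dynDist g v x y) (dynDist g u (wcomp g v x) (wcomp g v y)) := by
  induction u with
  | nil =>
    have h : dist (wcomp g v x) (wcomp g v y) ≤ dynDist g v x y := by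
      cases v <;> simp [dynDist]
    simp only [List.nil_append]
    have h0 : dynDist g [] (wcomp g v x) (wcomp g v y) = dist (wcomp g v x) (wcomp g v y) := by
      simp [dynDist, wcomp]
    rw [h0, max_eq_left h]
  | cons i u ih =>
    rw [List.cons_append, dynDist_cons, dynDist_cons, ih, ← List.cons_append, wcomp_append,
      wcomp_append, max_left_comm]

lemma foldr_max_lt {ε : ℝ} (hε : 0 < ε) (l : List ℝ) :
    l.foldr max 0 < ε ↔ ∀ a ∈ l, a < ε := by
  induction l with
  | nil => simpa
  | cons b l ih => simp [ih]

lemma neg_mul_le_birk {K : ℝ} (hK : ∀ x, -K ≤ φ x) (w : List (Fin m)) (x : X) :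
    -K * w.length ≤ birk g φ w x := by
  induction w with
  | nil => simp [birk]
  | cons i w ih =>
    rw [birk_cons, List.length_cons]
    push_cast
    linarith [hK (wcomp g w x)]

lemma birk_le_mul {K : ℝ} (hK : ∀ x, φ x ≤ K) (w : List (Fin m)) (x : X) :
    birk g φ w x ≤ K * w.length := by
  induction w with
  | nil => simp [birk]
  | cons i w ih =>
    rw [birk_cons, List.length_cons]
    push_cast
    linarith [hK (wcomp g w x)]

variable {g φ}

lemma continuous_wcomp [TopologicalSpace X] (hg : ∀ i, Continuous (g i)) (w : List (Fin m)) :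
    Continuous (wcomp g w) := by
  induction w with
  | nil => exact continuous_id
  | cons i w ih => exact (hg i).comp ih

lemma bddAbove_birk {K : ℝ} (hK : ∀ x, φ x ≤ K) (w : List (Fin m)) (U : Set X) :
    BddAbove (birk g φ w '' U) := by
  refine ⟨K * w.length, ?_⟩
  rintro _ ⟨x, -, rfl⟩
  exact birk_le_mul g φ hK w x

end Words

/-! ### Existence, lower bounds and joins of covers -/

section Covers

variable {m : ℕ} {X : Type*} [MetricSpace X] {g : Fin m → X → X} {φ : X → ℝ}

/-- By compactness, finitely many sets `⋂ₛ (g_s)⁻¹ (ball (g_s x) (ε / 2))`, with `s` ranging over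
the suffixes of `w`, cover the space. -/
lemma coverSet_nonempty [CompactSpace X] (hg : ∀ i, Continuous (g i))
    {ε : ℝ} (hε : 0 < ε) (w : List (Fin m)) : (coverSet g φ w ε).Nonempty := by
  let B : X → Set X := fun x =>
    ⋂ s ∈ w.tails.toFinset, wcomp g s ⁻¹' Metric.ball (wcomp g s x) (ε / 2)
  have hBo : ∀ x, IsOpen (B x) := fun x =>
    isOpen_biInter_finset fun s _ => Metric.isOpen_ball.preimage (continuous_wcomp hg s)
  have hBx : ∀ x, x ∈ B x := fun x => by simp [B, hε]
  obtain ⟨t, ht⟩ := CompactSpace.elim_nhds_subcover B fun x => (hBo x).mem_nhds (hBx x)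
  refine ⟨_, t.image B, ?_, ?_, rfl⟩
  · intro U hU
    obtain ⟨p, -, rfl⟩ := Finset.mem_image.1 hU
    refine ⟨hBo p, fun x hx y hy => ?_⟩
    rw [dynDist, foldr_max_lt hε]
    intro a ha
    obtain ⟨s, hs, rfl⟩ := List.mem_map.1 ha
    have hs' : s ∈ w.tails.toFinset := List.mem_toFinset.2 hs
    have h1 : dist (wcomp g s x) (wcomp g s p) < ε / 2 := (Set.mem_iInter₂.1 hx) s hs'
    have h2 : dist (wcomp g s y) (wcomp g s p) < ε / 2 := (Set.mem_iInter₂.1 hy) s hs'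
    linarith [dist_triangle_right (wcomp g s x) (wcomp g s y) (wcomp g s p)]
  · intro x
    have hx : x ∈ ⋃ p ∈ t, B p := by rw [ht]; trivial
    obtain ⟨p, hp, hxp⟩ := Set.mem_iUnion₂.1 hx
    exact ⟨B p, Finset.mem_image_of_mem _ hp, hxp⟩

lemma exp_le_of_mem_coverSet [Nonempty X] {K : ℝ} (hK : ∀ x, |φ x| ≤ K) {ε : ℝ}
    {w : List (Fin m)} {z : ℝ} (hz : z ∈ coverSet g φ w ε) :
    Real.exp (-K * w.length) ≤ z := by
  obtain ⟨𝒰, -, hcov, rfl⟩ := hz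
  obtain ⟨x⟩ := ‹Nonempty X›
  obtain ⟨U, hU, hxU⟩ := hcov x
  calc Real.exp (-K * w.length)
      ≤ Real.exp (sSup (birk g φ w '' U)) := by
        refine Real.exp_le_exp.2 ((neg_mul_le_birk g φ (fun y => (abs_le.1 (hK y)).1) w x).trans ?_)
        exact le_csSup (bddAbove_birk (fun y => (abs_le.1 (hK y)).2) w U) ⟨x, hxU, rfl⟩
    _ ≤ _ := Finset.single_le_sum (f := fun U => Real.exp (sSup (birk g φ w '' U)))
        (fun _ _ => (Real.exp_pos _).le) hU

lemma exp_le_coverInf [CompactSpace X] [Nonempty X] (hg : ∀ i, Continuous (g i))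
    {K : ℝ} (hK : ∀ x, |φ x| ≤ K) {ε : ℝ} (hε : 0 < ε) (w : List (Fin m)) :
    Real.exp (-K * w.length) ≤ coverInf g φ w ε :=
  le_csInf (coverSet_nonempty hg hε w) fun _ hz => exp_le_of_mem_coverSet hK hz

/-- The join of a cover for `v` with the `g_v`-preimage of a cover for `u`. -/
lemma exists_mem_coverSet_append (hg : ∀ i, Continuous (g i)) {K : ℝ} (hK : ∀ x, |φ x| ≤ K)
    {ε : ℝ} {u v : List (Fin m)} {y z : ℝ}
    (hy : y ∈ coverSet g φ u ε) (hz : z ∈ coverSet g φ v ε) :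
    ∃ t ∈ coverSet g φ (u ++ v) ε, t ≤ y * z := by
  obtain ⟨𝒰, hU, hUcov, rfl⟩ := hy
  obtain ⟨𝒱, hV, hVcov, rfl⟩ := hz
  let J : Set X × Set X → Set X := fun p => p.2 ∩ wcomp g v ⁻¹' p.1
  -- Empty intersections are discarded: since `sSup ∅ = 0`, each would contribute `exp 0 = 1`.
  let P : Finset (Set X × Set X) := (𝒰 ×ˢ 𝒱).filter fun p => (J p).Nonempty
  refine ⟨_, ⟨P.image J, ?_, ?_, rfl⟩, ?_⟩
  · intro W hW
    obtain ⟨p, hp, rfl⟩ := Finset.mem_image.1 hW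
    have hp' := Finset.mem_product.1 (Finset.mem_filter.1 hp).1
    refine ⟨(hV _ hp'.2).1.inter ((hU _ hp'.1).1.preimage (continuous_wcomp hg v)), ?_⟩
    intro x hx y hy
    rw [dynDist_append]
    exact max_lt ((hV _ hp'.2).2 x hx.1 y hy.1) ((hU _ hp'.1).2 _ hx.2 _ hy.2)
  · intro x
    obtain ⟨V, hVm, hxV⟩ := hVcov x
    obtain ⟨U, hUm, hxU⟩ := hUcov (wcomp g v x)
    refine ⟨J (U, V), Finset.mem_image_of_mem _ (Finset.mem_filter.2
      ⟨Finset.mem_product.2 ⟨hUm, hVm⟩, ⟨x, hxV, hxU⟩⟩), ⟨hxV, hxU⟩⟩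
  · have hbdd := fun (w : List (Fin m)) (U : Set X) =>
      bddAbove_birk (g := g) (fun y => (abs_le.1 (hK y)).2) w U
    calc ∑ W ∈ P.image J, Real.exp (sSup (birk g φ (u ++ v) '' W))
        ≤ ∑ p ∈ P, Real.exp (sSup (birk g φ (u ++ v) '' J p)) :=
          Finset.sum_image_le_of_nonneg fun _ _ => (Real.exp_pos _).le
      _ ≤ ∑ p ∈ P, Real.exp (sSup (birk g φ u '' p.1)) * Real.exp (sSup (birk g φ v '' p.2)) := by
          refine Finset.sum_le_sum fun p hp => ?_
          rw [← Real.exp_add]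
          refine Real.exp_le_exp.2 (csSup_le ((Finset.mem_filter.1 hp).2.image _) ?_)
          rintro _ ⟨x, hx, rfl⟩
          rw [birk_append, add_comm]
          exact add_le_add (le_csSup (hbdd u p.1) ⟨_, hx.2, rfl⟩)
            (le_csSup (hbdd v p.2) ⟨_, hx.1, rfl⟩)
      _ ≤ ∑ p ∈ 𝒰 ×ˢ 𝒱,
            Real.exp (sSup (birk g φ u '' p.1)) * Real.exp (sSup (birk g φ v '' p.2)) :=
          Finset.sum_le_sum_of_subset_of_nonneg (Finset.filter_subset _ _)
            fun _ _ _ => by positivity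
      _ = _ := by rw [Finset.sum_mul_sum, Finset.sum_product]

lemma coverInf_append_le [CompactSpace X] [Nonempty X] (hg : ∀ i, Continuous (g i))
    {K : ℝ} (hK : ∀ x, |φ x| ≤ K) {ε : ℝ} (hε : 0 < ε) (u v : List (Fin m)) :
    coverInf g φ (u ++ v) ε ≤ coverInf g φ u ε * coverInf g φ v ε := by
  have hpos : ∀ w, 0 < coverInf g φ w ε := fun w =>
    (Real.exp_pos _).trans_le (exp_le_coverInf hg hK hε w)
  have hmul : ∀ y ∈ coverSet g φ u ε, ∀ z ∈ coverSet g φ v ε,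
      coverInf g φ (u ++ v) ε ≤ y * z := by
    intro y hy z hz
    obtain ⟨t, ht, hle⟩ := exists_mem_coverSet_append hg hK hy hz
    exact (csInf_le ⟨_, fun _ h => exp_le_of_mem_coverSet hK h⟩ ht).trans hle
  rw [← div_le_iff₀ (hpos v)]
  refine le_csInf (coverSet_nonempty hg hε u) fun y hy => ?_
  have hy0 : 0 < y := (Real.exp_pos _).trans_le (exp_le_of_mem_coverSet hK hy)
  rw [div_le_iff₀ (hpos v), ← div_le_iff₀' hy0]
  refine le_csInf (coverSet_nonempty hg hε v) fun z hz => ?_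
  rw [div_le_iff₀' hy0]
  exact hmul y hy z hz

/-! ### Summation over words -/

lemma coverSum_add_le [CompactSpace X] [Nonempty X] (hg : ∀ i, Continuous (g i))
    {K : ℝ} (hK : ∀ x, |φ x| ≤ K) {ε : ℝ} (hε : 0 < ε) (a b : ℕ) :
    coverSum g φ (a + b) ε ≤ coverSum g φ a ε * coverSum g φ b ε := by
  rw [coverSum_eq, coverSum_eq, coverSum_eq, Finset.sum_mul_sum, ← Finset.sum_product',
    Finset.univ_product_univ, ← (Fin.appendEquiv a b).sum_comp]
  refine Finset.sum_le_sum fun p _ => ?_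
  have h : List.ofFn (Fin.appendEquiv a b p) = List.ofFn p.1 ++ List.ofFn p.2 :=
    List.ofFn_fin_append p.1 p.2
  rw [h]
  exact coverInf_append_le hg hK hε _ _

lemma exp_le_coverSum [CompactSpace X] [Nonempty X] (hg : ∀ i, Continuous (g i))
    {K : ℝ} (hK : ∀ x, |φ x| ≤ K) {ε : ℝ} (hε : 0 < ε) (hm : 0 < m) (n : ℕ) :
    Real.exp (-K * n) ≤ coverSum g φ n ε := by
  have h := fun f : Fin n → Fin m => exp_le_coverInf hg hK hε (List.ofFn f)
  simp only [List.length_ofFn] at h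
  rw [coverSum_eq]
  exact (h fun _ => ⟨0, hm⟩).trans (Finset.single_le_sum
    (f := fun f : Fin n → Fin m => coverInf g φ (List.ofFn f) ε)
    (fun f _ => (Real.exp_pos _).le.trans (h f)) (Finset.mem_univ _))

/-- For the empty generating set there is no word of positive length. -/
lemma coverSum_eq_zero (g : Fin 0 → X → X) {n : ℕ} (hn : n ≠ 0) (ε : ℝ) :
    coverSum g φ n ε = 0 := by
  rw [coverSum_eq]
  obtain ⟨k, rfl⟩ := Nat.exists_eq_succ_of_ne_zero hn
  have : IsEmpty (Fin (k + 1) → Fin 0) := ⟨fun f => (f 0).elim0⟩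
  exact Finset.sum_of_isEmpty _

/-- The only word of length zero is the empty one, and each admissible cover has partition sum
at least `exp 0 = 1`; this holds without generators too. -/
lemma one_le_coverSum_zero [CompactSpace X] [Nonempty X] (hg : ∀ i, Continuous (g i))
    {K : ℝ} (hK : ∀ x, |φ x| ≤ K) {ε : ℝ} (hε : 0 < ε) : 1 ≤ coverSum g φ 0 ε := by
  rw [coverSum_eq, Fintype.sum_unique]
  simpa using exp_le_coverInf hg hK hε (List.ofFn (default : Fin 0 → Fin m))

end Covers

/-! ### Subadditivity and convergence -/

/-- For a finitely generated semigroup action of continuous maps on a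
(nonempty) compact metric space and any continuous potential, the sequence
`a_n = log (∑_{|w|=n} inf_𝒰 ∑_{U∈𝒰} e^{sup_U S_w φ})` is subadditive and, consequently, the
sequence `(1/n) log (m^{-n} ∑_{|w|=n} inf_𝒰 ∑_{U∈𝒰} e^{sup_U S_w φ})` converges. -/
theorem cover_partition_function_subadditive_and_convergent
    {X : Type*} [MetricSpace X] [CompactSpace X] [Nonempty X]
    {m : ℕ} (g : Fin m → X → X) (hg : ∀ i, Continuous (g i))
    (φ : X → ℝ) (hφ : Continuous φ) (ε : ℝ) (hε : 0 < ε) :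
    (∀ a b : ℕ, Real.log (coverSum g φ (a + b) ε) ≤
      Real.log (coverSum g φ a ε) + Real.log (coverSum g φ b ε)) ∧
    ∃ P : ℝ, Tendsto (fun n : ℕ => Real.log (coverZ g φ n ε) / n) atTop (nhds P) := by
  obtain ⟨K, hK⟩ : ∃ K, ∀ x, |φ x| ≤ K := by
    obtain ⟨K, hK⟩ := isCompact_univ.exists_bound_of_continuousOn hφ.continuousOn
    exact ⟨K, fun x => hK x trivial⟩
  rcases Nat.eq_zero_or_pos m with rfl | hm
  · -- Without generators only the empty word exists, and `Real.log 0 = 0` governs the rest.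
    have h0 : 0 ≤ Real.log (coverSum g φ 0 ε) := Real.log_nonneg (one_le_coverSum_zero hg hK hε)
    have hlog : ∀ n, 0 ≤ Real.log (coverSum g φ n ε) := by
      intro n
      rcases eq_or_ne n 0 with rfl | hn
      · exact h0
      · simp [coverSum_eq_zero g hn]
    refine ⟨fun a b => ?_, 0, tendsto_const_nhds.congr' ?_⟩
    · rcases eq_or_ne (a + b) 0 with h | h
      · obtain ⟨rfl, rfl⟩ : a = 0 ∧ b = 0 := by omega
        simpa using h0
      · rw [coverSum_eq_zero g h, Real.log_zero]
        exact add_nonneg (hlog a) (hlog b)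
    · filter_upwards [eventually_ne_atTop 0] with n hn
      simp [coverZ, coverSum_eq_zero g hn]
  · have hexp := exp_le_coverSum hg hK hε hm
    have hpos : ∀ n, 0 < coverSum g φ n ε := fun n => (Real.exp_pos _).trans_le (hexp n)
    have hsub : Subadditive fun n => Real.log (coverSum g φ n ε) := fun a b => by
      rw [← Real.log_mul (hpos a).ne' (hpos b).ne']
      exact Real.log_le_log (hpos _) (coverSum_add_le hg hK hε a b)
    refine ⟨hsub, hsub.lim - Real.log m, ?_⟩
    have hK0 : 0 ≤ K := (abs_nonneg _).trans (hK (Classical.arbitrary X))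
    have hbdd : BddBelow (Set.range fun n : ℕ => Real.log (coverSum g φ n ε) / n) := by
      refine ⟨-K, ?_⟩
      rintro _ ⟨n, rfl⟩
      rcases eq_or_ne n 0 with rfl | hn
      · simpa using hK0
      · have hn' : (0 : ℝ) < n := by positivity
        exact (le_div_iff₀ hn').2 ((Real.le_log_iff_exp_le (hpos n)).2 (hexp n))
    refine ((hsub.tendsto_lim hbdd).sub_const (Real.log m)).congr' ?_
    filter_upwards [eventually_ne_atTop 0] with n hn
    have hn' : (n : ℝ) ≠ 0 := Nat.cast_ne_zero.2 hn
    have hm' : (m : ℝ) ≠ 0 := Nat.cast_ne_zero.2 hm.ne'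
    rw [coverZ, Real.log_mul (by positivity) (hpos n).ne', one_div, Real.log_inv, Real.log_pow]
    field_simp
    ring
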